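/- arXiv:1307.8278 — 2 statements merged into one kernel-verified Lean document; each statement's English description precedes it below -/
import Mathlib

section
/- For every real number x that is not an integer multiple of π, 1/sin²x = ∑_{k∈ℤ} 1/(x+kπ)², where the sum is over all integers k. -/
open Real

/-!
On the upper half-plane the identity `∑ₙ 1 / (z + n)² = π² / sin² (π z)` is the derivative of the
Mittag-Leffler expansion of `π cot (π z)`, which Mathlib provides there. To reach a real
non-integer `y`, put `z = y + i t` and let `t → 0⁺`: since `|y + i t + n| ≥ |y + n|`, the series is
dominated termwise by the summable `1 / (y + n)²`, so dominated convergence passes the identity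
to the limit. The substitution `x = π y` finishes the proof.
-/

/-- The identity on the open upper half-plane: the derivative of the cotangent expansion. -/
lemma tsum_one_div_add_int_sq_of_im_pos {z : ℂ} (hz : 0 < z.im) :
    ∑' n : ℤ, 1 / (z + n) ^ 2 = π ^ 2 / Complex.sin (π * z) ^ 2 := by
  have hz' : z ∈ UpperHalfPlane.upperHalfPlaneSet := hz
  have hs : Complex.sin (π * z) ≠ 0 :=
    sin_pi_mul_ne_zero (UpperHalfPlane.coe_mem_integerComplement ⟨z, hz⟩)
  have h := iteratedDerivWithin_cot_pi_mul_eq_mul_tsum_div_pow le_rfl hz'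
  have hlin : HasDerivAt (fun w : ℂ ↦ (π : ℂ) * w) π z := by
    simpa using (hasDerivAt_id z).const_mul (π : ℂ)
  have hd : HasDerivAt (fun w : ℂ ↦ (π : ℂ) * Complex.cot (π * w))
      (-(π ^ 2 / Complex.sin (π * z) ^ 2)) z := by
    refine ((hlin.ccos.div hlin.csin hs).const_mul (π : ℂ)).congr_deriv ?_
    field_simp
    linear_combination -(Complex.sin_sq_add_cos_sq (π * z))
  rw [iteratedDerivWithin_one, hd.hasDerivWithinAt.derivWithin
    (UpperHalfPlane.isOpen_upperHalfPlaneSet.uniqueDiffWithinAt hz')] at h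
  simpa using h.symm

open Filter Topology in
/-- The identity at a real non-integer point, as a boundary value from the upper half-plane. -/
lemma tsum_one_div_add_int_sq_of_real {y : ℝ} (hy : ∀ n : ℤ, y + n ≠ 0) :
    ∑' n : ℤ, 1 / ((y : ℂ) + n) ^ 2 = π ^ 2 / Complex.sin (π * y) ^ 2 := by
  have hyc : ∀ n : ℤ, (y : ℂ) + n ≠ 0 := fun n ↦ by exact_mod_cast hy n
  have hs : Complex.sin (π * y) ≠ 0 := by
    refine sin_pi_mul_ne_zero ?_
    rintro ⟨n, hn⟩
    apply hyc (-n)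
    simp [← hn]
  have hz : Tendsto (fun t : ℝ ↦ (y : ℂ) + t * Complex.I) (𝓝[>] 0) (𝓝 y) := by
    have : Continuous fun t : ℝ ↦ (y : ℂ) + t * Complex.I := by fun_prop
    simpa using (this.tendsto 0).mono_left nhdsWithin_le_nhds
  have hsum : Summable fun n : ℤ ↦ ‖1 / ((y : ℂ) + n) ^ 2‖ := by
    have := (EisensteinSeries.linear_right_summable (y : ℂ) 1 (k := 2) le_rfl).norm
    refine this.congr fun n ↦ ?_
    simp [zpow_ofNat]
  have hL : Tendsto (fun t : ℝ ↦ ∑' n : ℤ, 1 / ((y : ℂ) + t * Complex.I + n) ^ 2) (𝓝[>] 0)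
      (𝓝 (∑' n : ℤ, 1 / ((y : ℂ) + n) ^ 2)) := by
    refine tendsto_tsum_of_dominated_convergence hsum (fun n ↦ ?_)
      (Eventually.of_forall fun t n ↦ ?_)
    · exact tendsto_const_nhds.div ((hz.add_const _).pow 2) (pow_ne_zero 2 (hyc n))
    · have hle : ‖(y : ℂ) + n‖ ≤ ‖(y : ℂ) + t * Complex.I + n‖ := by
        have h1 : ‖(y : ℂ) + n‖ = |y + n| := by
          rw [← Real.norm_eq_abs, ← Complex.norm_real]
          push_cast
          rfl
        simpa [h1] using Complex.abs_re_le_norm ((y : ℂ) + t * Complex.I + n)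
      have hpos : 0 < ‖(y : ℂ) + n‖ := norm_pos_iff.mpr (hyc n)
      simp only [norm_div, norm_pow, norm_one]
      gcongr
  have hR : Tendsto (fun t : ℝ ↦ (π : ℂ) ^ 2 / Complex.sin (π * (y + t * Complex.I)) ^ 2)
      (𝓝[>] 0) (𝓝 (π ^ 2 / Complex.sin (π * y) ^ 2)) :=
    tendsto_const_nhds.div
      (((Complex.continuous_sin.tendsto _).comp (hz.const_mul _)).pow 2) (pow_ne_zero 2 hs)
  refine tendsto_nhds_unique (hL.congr' ?_) hR
  filter_upwards [self_mem_nhdsWithin] with t ht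
  exact tsum_one_div_add_int_sq_of_im_pos (by simpa using ht)

/-- For x not an integer multiple of π, 1/sin²x = ∑_{k ∈ ℤ} 1/(x+kπ)². -/
theorem one_div_sin_sq_eq_tsum (x : ℝ) (hx : ∀ k : ℤ, x ≠ k * π) :
    1 / Real.sin x ^ 2 = ∑' k : ℤ, 1 / (x + k * π) ^ 2 := by
  have hπ := Real.pi_ne_zero
  obtain ⟨y, rfl⟩ : ∃ y, x = π * y := ⟨x / π, by field_simp⟩
  have hy : ∀ n : ℤ, y + n ≠ 0 := fun n h ↦ hx (-n) (by
    rw [eq_neg_of_add_eq_zero_left h]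
    push_cast
    ring)
  have h : ∑' n : ℤ, 1 / (y + n) ^ 2 = π ^ 2 / Real.sin (π * y) ^ 2 := by
    exact_mod_cast tsum_one_div_add_int_sq_of_real hy
  have hterm : ∀ k : ℤ, 1 / (π * y + k * π) ^ 2 = 1 / π ^ 2 * (1 / (y + k) ^ 2) := fun k ↦ by
    rw [show π * y + k * π = π * (y + k) by ring, mul_pow, one_div_mul_one_div]
  simp_rw [hterm]
  rw [tsum_mul_left, h]
  field_simp
end

section
/- For every natural number n ≥ 1 and every real number x with sin x ≠ 0 and sin((kπ+x)/2^n) ≠ 0 for all 0 ≤ k ≤ 2^n−1, one has 1/sin²x = (1/2^{2n}) ∑_{k=0}^{2^n−1} 1/sin²((kπ+x)/2^n). -/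
/-!
The half-angle formula `1/sin²x = (1/4) (1/sin²(x/2) + 1/sin²((π+x)/2))` holds whenever
`sin x ≠ 0`, since `sin((π+x)/2) = cos(x/2)` and `sin x = 2 sin(x/2) cos(x/2)`. The identity
follows by induction on `n`, for all `x` at once: applying the case `n` at `x/2` and at `(π+x)/2`
produces respectively the even-indexed and the odd-indexed terms of the sum for `n + 1`.
-/

open Real Finset

lemma sum_range_two_mul_even_odd (f : ℕ → ℝ) (m : ℕ) :
    ∑ k ∈ Finset.range (2 * m), f k =
      ∑ j ∈ Finset.range m, f (2 * j) + ∑ j ∈ Finset.range m, f (2 * j + 1) := by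
  induction m with
  | zero => simp
  | succ m ih =>
    rw [show 2 * (m + 1) = 2 * m + 1 + 1 by ring, Finset.sum_range_succ, Finset.sum_range_succ, ih,
      Finset.sum_range_succ, Finset.sum_range_succ]
    ring

lemma sin_add_pi_half (x : ℝ) : Real.sin ((π + x) / 2) = Real.cos (x / 2) := by
  rw [show (π + x) / 2 = x / 2 + π / 2 by ring, Real.sin_add_pi_div_two]

lemma sin_eq_two_mul_half (x : ℝ) :
    Real.sin x = 2 * Real.sin (x / 2) * Real.cos (x / 2) := by
  rw [← Real.sin_two_mul, mul_div_cancel₀ x two_ne_zero]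

lemma one_div_sin_sq_half_angle (x : ℝ) (hs : Real.sin (x / 2) ≠ 0)
    (hc : Real.cos (x / 2) ≠ 0) :
    1 / Real.sin x ^ 2 =
      1 / 4 * (1 / Real.sin (x / 2) ^ 2 + 1 / Real.sin ((π + x) / 2) ^ 2) := by
  rw [sin_add_pi_half, sin_eq_two_mul_half x]
  field_simp
  linarith [Real.sin_sq_add_cos_sq (x / 2)]

/-- The bisection identity under `sin x ≠ 0` alone, which already forces every term of the sum to
have a nonzero denominator. -/
lemma one_div_sin_sq_bisection_aux (n : ℕ) : ∀ x : ℝ, Real.sin x ≠ 0 →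
    1 / Real.sin x ^ 2 =
      (1 / 2 ^ (2 * n)) *
        ∑ k ∈ Finset.range (2 ^ n), 1 / Real.sin (((k : ℝ) * π + x) / 2 ^ n) ^ 2 := by
  induction n with
  | zero => intro x _; simp
  | succ n ih =>
    intro x hx
    have hx' := hx
    rw [sin_eq_two_mul_half] at hx'
    have hc : Real.cos (x / 2) ≠ 0 := right_ne_zero_of_mul hx'
    have hs : Real.sin (x / 2) ≠ 0 := right_ne_zero_of_mul (left_ne_zero_of_mul hx')
    have he : ∀ j : ℕ, (((2 * j : ℕ) : ℝ) * π + x) / 2 ^ (n + 1) =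
        ((j : ℝ) * π + x / 2) / 2 ^ n := by
      intro j
      rw [pow_succ]
      push_cast
      field_simp
    have ho : ∀ j : ℕ, (((2 * j + 1 : ℕ) : ℝ) * π + x) / 2 ^ (n + 1) =
        ((j : ℝ) * π + (π + x) / 2) / 2 ^ n := by
      intro j
      rw [pow_succ]
      push_cast
      field_simp
      ring
    rw [one_div_sin_sq_half_angle x hs hc, ih _ hs, ih ((π + x) / 2) (by rwa [sin_add_pi_half]),
      pow_succ' 2 n, sum_range_two_mul_even_odd]
    simp only [he, ho]
    rw [show 2 * (n + 1) = 2 * n + 2 by ring, pow_add, ← mul_add]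
    generalize (_ + _ : ℝ) = S
    field_simp
    ring

/-- The repeated bisection identity:
1/sin²x = (1/2^{2n}) ∑_{k=0}^{2^n−1} 1/sin²((kπ+x)/2^n). -/
theorem one_div_sin_sq_bisection (n : ℕ) (hn : 1 ≤ n) (x : ℝ) (hx : Real.sin x ≠ 0)
    (h : ∀ k : ℕ, k ≤ 2 ^ n - 1 → Real.sin (((k : ℝ) * π + x) / 2 ^ n) ≠ 0) :
    1 / Real.sin x ^ 2 =
      (1 / 2 ^ (2 * n)) *
        ∑ k ∈ Finset.range (2 ^ n), 1 / Real.sin (((k : ℝ) * π + x) / 2 ^ n) ^ 2 :=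
  one_div_sin_sq_bisection_aux n x hx
end
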